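/- arXiv:2005.04507 — 4 statements merged into one kernel-verified Lean document; each statement's English description precedes it below -/
import Mathlib

section
/- Let f : ℝ^d → ℝ be differentiable, ℓ-gradient Lipschitz (ℓ > 0), and α-strongly convex (0 < α ≤ ℓ), with global minimizer x*. Fix x₀ ∈ ℝ^d with x₀ ≠ x*, and define the gradient descent iterates x_{t+1} = x_t − η ∇f(x_t) with step size η = 1/ℓ. Then for every ε with 0 < ε ≤ ‖x₀ − x*‖ and every natural number T with T ≥ (2ℓ/α) · log(‖x₀ − x*‖ / ε), one has ‖x_T − x*‖ ≤ ε. -/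
open scoped RealInnerProductSpace

/-!
Let `g = ∇ f x` and let `x⁺ = x - η • g` be one gradient step with `η * ℓ ≤ 1`. The descent lemma
gives `η / 2 * ‖g‖ ^ 2 ≤ f x - f x⁺ ≤ f x - f x⋆`, and strong convexity gives
`f x - f x⋆ + α / 2 * ‖x - x⋆‖ ^ 2 ≤ ⟪g, x - x⋆⟫`. Hence in the expansion of `‖x⁺ - x⋆‖ ^ 2` the
term `η ^ 2 * ‖g‖ ^ 2` is absorbed by the cross term, which leaves
`‖x⁺ - x⋆‖ ^ 2 ≤ (1 - α * η) * ‖x - x⋆‖ ^ 2`. The factor `1 - α * η` is at most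
`exp (-(α * η))`, which is positive, so the bound can be iterated.
-/

section GradientDescent

open scoped Gradient

variable {E : Type*} [NormedAddCommGroup E] [InnerProductSpace ℝ E] [CompleteSpace E]
  {f : E → ℝ} {ℓ α η : ℝ}

lemma hasDerivAt_comp_add_smul_gradient {x v : E} {t : ℝ}
    (hf : DifferentiableAt ℝ f (x + t • v)) :
    HasDerivAt (fun s : ℝ ↦ f (x + s • v)) ⟪∇ f (x + t • v), v⟫ t := by
  have hline : HasDerivAt (fun s : ℝ ↦ x + s • v) v t := by
    simpa using ((hasDerivAt_id t).smul_const v).const_add x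
  rw [inner_gradient_left]
  exact hf.hasFDerivAt.comp_hasDerivAt t hline

lemma inner_gradient_add_smul_le (hlip : ∀ x y, ‖∇ f x - ∇ f y‖ ≤ ℓ * ‖x - y‖) (x v : E)
    {t : ℝ} (ht : 0 ≤ t) :
    ⟪∇ f (x + t • v), v⟫ ≤ ⟪∇ f x, v⟫ + ℓ * ‖v‖ ^ 2 * t := by
  rw [← sub_le_iff_le_add', ← inner_sub_left]
  calc ⟪∇ f (x + t • v) - ∇ f x, v⟫
      ≤ ‖∇ f (x + t • v) - ∇ f x‖ * ‖v‖ := real_inner_le_norm _ _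
    _ ≤ ℓ * ‖x + t • v - x‖ * ‖v‖ := by gcongr; exact hlip _ _
    _ = ℓ * ‖v‖ ^ 2 * t := by
      rw [add_sub_cancel_left, norm_smul, Real.norm_of_nonneg ht]
      ring

lemma le_quadratic_of_lipschitz_gradient (hf : Differentiable ℝ f)
    (hlip : ∀ x y, ‖∇ f x - ∇ f y‖ ≤ ℓ * ‖x - y‖) (x v : E) :
    f (x + v) ≤ f x + ⟪∇ f x, v⟫ + ℓ / 2 * ‖v‖ ^ 2 := by
  have hpath (t : ℝ) := hasDerivAt_comp_add_smul_gradient (hf (x + t • v))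
  have hmodel (t : ℝ) :
      HasDerivAt (fun s : ℝ ↦ f x + s * ⟪∇ f x, v⟫ + ℓ / 2 * ‖v‖ ^ 2 * s ^ 2)
        (⟪∇ f x, v⟫ + ℓ * ‖v‖ ^ 2 * t) t := by
    have hlin := ((hasDerivAt_id t).mul_const ⟪∇ f x, v⟫).const_add (f x)
    have hsq := ((hasDerivAt_id t).pow 2).const_mul (ℓ / 2 * ‖v‖ ^ 2)
    refine (hlin.add hsq).congr_deriv ?_
    simp only [id_eq]
    ring
  have hle := image_le_of_deriv_right_le_deriv_boundary
    (fun t _ ↦ (hpath t).continuousAt.continuousWithinAt)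
    (fun t _ ↦ (hpath t).hasDerivWithinAt) (by simp)
    (fun t _ ↦ (hmodel t).continuousAt.continuousWithinAt)
    (fun t _ ↦ (hmodel t).hasDerivWithinAt)
    (fun t ht ↦ inner_gradient_add_smul_le hlip x v ht.1)
    (Set.right_mem_Icc.2 (zero_le_one' ℝ))
  simpa using hle

lemma apply_gradient_step_le (hf : Differentiable ℝ f)
    (hlip : ∀ x y, ‖∇ f x - ∇ f y‖ ≤ ℓ * ‖x - y‖) (hη : 0 ≤ η) (hηℓ : η * ℓ ≤ 1) (x : E) :
    f (x - η • ∇ f x) ≤ f x - η / 2 * ‖∇ f x‖ ^ 2 := by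
  calc f (x - η • ∇ f x)
      ≤ f x + ⟪∇ f x, -(η • ∇ f x)⟫ + ℓ / 2 * ‖-(η • ∇ f x)‖ ^ 2 := by
        rw [sub_eq_add_neg]
        exact le_quadratic_of_lipschitz_gradient hf hlip x _
    _ = f x - η * ‖∇ f x‖ ^ 2 + η * ℓ * (η / 2 * ‖∇ f x‖ ^ 2) := by
        rw [inner_neg_right, real_inner_smul_right, real_inner_self_eq_norm_sq, norm_neg,
          norm_smul, Real.norm_of_nonneg hη]
        ring
    _ ≤ f x - η * ‖∇ f x‖ ^ 2 + 1 * (η / 2 * ‖∇ f x‖ ^ 2) := by gcongr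
    _ = f x - η / 2 * ‖∇ f x‖ ^ 2 := by ring

variable {xstar : E}

lemma norm_gradient_step_sub_sq_le (hf : Differentiable ℝ f)
    (hlip : ∀ x y, ‖∇ f x - ∇ f y‖ ≤ ℓ * ‖x - y‖) (hη : 0 ≤ η) (hηℓ : η * ℓ ≤ 1)
    (hmin : ∀ y, f xstar ≤ f y) {x : E}
    (hsc : f x + ⟪∇ f x, xstar - x⟫ + α / 2 * ‖xstar - x‖ ^ 2 ≤ f xstar) :
    ‖x - η • ∇ f x - xstar‖ ^ 2 ≤ (1 - α * η) * ‖x - xstar‖ ^ 2 := by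
  have hgap : η / 2 * ‖∇ f x‖ ^ 2 ≤ f x - f xstar := by
    linarith [hmin (x - η • ∇ f x), apply_gradient_step_le hf hlip hη hηℓ x]
  have hinner : f x - f xstar + α / 2 * ‖x - xstar‖ ^ 2 ≤ ⟪∇ f x, x - xstar⟫ := by
    rw [← neg_sub x xstar, inner_neg_right, norm_neg] at hsc
    linarith
  calc ‖x - η • ∇ f x - xstar‖ ^ 2
      = ‖x - xstar‖ ^ 2 - 2 * η * ⟪∇ f x, x - xstar⟫ + 2 * η * (η / 2 * ‖∇ f x‖ ^ 2) := by
        rw [sub_right_comm, norm_sub_sq_real, real_inner_smul_right, real_inner_comm, norm_smul,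
          Real.norm_of_nonneg hη]
        ring
    _ ≤ ‖x - xstar‖ ^ 2 - 2 * η * (f x - f xstar + α / 2 * ‖x - xstar‖ ^ 2)
          + 2 * η * (f x - f xstar) := by gcongr
    _ = (1 - α * η) * ‖x - xstar‖ ^ 2 := by ring

lemma norm_gradient_step_sub_le (hf : Differentiable ℝ f)
    (hlip : ∀ x y, ‖∇ f x - ∇ f y‖ ≤ ℓ * ‖x - y‖) (hη : 0 ≤ η) (hηℓ : η * ℓ ≤ 1)
    (hmin : ∀ y, f xstar ≤ f y) {x : E}
    (hsc : f x + ⟪∇ f x, xstar - x⟫ + α / 2 * ‖xstar - x‖ ^ 2 ≤ f xstar) :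
    ‖x - η • ∇ f x - xstar‖ ≤ Real.exp (-(α * η / 2)) * ‖x - xstar‖ := by
  refine le_of_sq_le_sq ?_ (by positivity)
  calc ‖x - η • ∇ f x - xstar‖ ^ 2
      ≤ (1 - α * η) * ‖x - xstar‖ ^ 2 := norm_gradient_step_sub_sq_le hf hlip hη hηℓ hmin hsc
    _ ≤ Real.exp (-(α * η)) * ‖x - xstar‖ ^ 2 := by gcongr; exact Real.one_sub_le_exp_neg _
    _ = (Real.exp (-(α * η / 2)) * ‖x - xstar‖) ^ 2 := by
        rw [mul_pow, ← Real.exp_nat_mul]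
        ring_nf

lemma norm_gradient_descent_sub_le (hf : Differentiable ℝ f)
    (hlip : ∀ x y, ‖∇ f x - ∇ f y‖ ≤ ℓ * ‖x - y‖) (hη : 0 ≤ η) (hηℓ : η * ℓ ≤ 1)
    (hmin : ∀ y, f xstar ≤ f y)
    (hsc : ∀ x, f x + ⟪∇ f x, xstar - x⟫ + α / 2 * ‖xstar - x‖ ^ 2 ≤ f xstar)
    {x : ℕ → E} (hx : ∀ t, x (t + 1) = x t - η • ∇ f (x t)) (T : ℕ) :
    ‖x T - xstar‖ ≤ Real.exp (-(α * η / 2 * T)) * ‖x 0 - xstar‖ := by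
  have hgeom : ‖x T - xstar‖ ≤ Real.exp (-(α * η / 2)) ^ T * ‖x 0 - xstar‖ := by
    refine le_geom (u := fun t ↦ ‖x t - xstar‖) (Real.exp_nonneg _) T fun t _ ↦ ?_
    simpa only [hx t] using norm_gradient_step_sub_le hf hlip hη hηℓ hmin (hsc (x t))
  rwa [← Real.exp_nat_mul, mul_neg, mul_comm (T : ℝ)] at hgeom

lemma exp_neg_mul_le_of_log_div_le {a ε s : ℝ} (hε : 0 < ε) (hs : Real.log (a / ε) ≤ s) :
    Real.exp (-s) * a ≤ ε := by
  have ha : a / ε ≤ Real.exp s := (Real.le_exp_log _).trans (Real.exp_le_exp.2 hs)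
  rwa [Real.exp_neg, inv_mul_le_iff₀ (Real.exp_pos s), ← div_le_iff₀ hε]

theorem stmt_1_general (hf : Differentiable ℝ f)
    (hlip : ∀ x y, ‖∇ f x - ∇ f y‖ ≤ ℓ * ‖x - y‖) (hη : 0 < η) (hηℓ : η * ℓ ≤ 1) (hα : 0 < α)
    (hmin : ∀ y, f xstar ≤ f y)
    (hsc : ∀ x, f x + ⟪∇ f x, xstar - x⟫ + α / 2 * ‖xstar - x‖ ^ 2 ≤ f xstar)
    {x : ℕ → E} (hx : ∀ t, x (t + 1) = x t - η • ∇ f (x t)) {ε : ℝ} (hε : 0 < ε) {T : ℕ}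
    (hT : 2 / (α * η) * Real.log (‖x 0 - xstar‖ / ε) ≤ T) :
    ‖x T - xstar‖ ≤ ε := by
  have hlog : Real.log (‖x 0 - xstar‖ / ε) ≤ α * η / 2 * T := by
    rwa [← inv_div, inv_mul_le_iff₀ (by positivity)] at hT
  exact (norm_gradient_descent_sub_le hf hlip hη.le hηℓ hmin hsc hx T).trans
    (exp_neg_mul_le_of_log_div_le hε hlog)

end GradientDescent

/-- Linear convergence of gradient descent (step size `1/ℓ`) for an
`ℓ`-gradient-Lipschitz, `α`-strongly convex function with global minimizer `xstar`:
after `T ≥ (2ℓ/α) log(‖x₀ - xstar‖/ε)` iterations, `‖x_T - xstar‖ ≤ ε`. -/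
theorem stmt_1 {d : ℕ} (f : EuclideanSpace ℝ (Fin d) → ℝ)
    (ℓ α : ℝ) (hℓ : 0 < ℓ) (hα : 0 < α) (hαℓ : α ≤ ℓ)
    (hdiff : Differentiable ℝ f)
    (hlip : ∀ x y : EuclideanSpace ℝ (Fin d),
      ‖gradient f x - gradient f y‖ ≤ ℓ * ‖x - y‖)
    (hsc : ∀ x y : EuclideanSpace ℝ (Fin d),
      f x + ⟪gradient f x, y - x⟫ + (α / 2) * ‖y - x‖ ^ 2 ≤ f y)
    (xstar : EuclideanSpace ℝ (Fin d)) (hmin : ∀ y, f xstar ≤ f y)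
    (x₀ : EuclideanSpace ℝ (Fin d)) (hx₀ : x₀ ≠ xstar)
    (x : ℕ → EuclideanSpace ℝ (Fin d)) (hx0 : x 0 = x₀)
    (hxrec : ∀ t, x (t + 1) = x t - (1 / ℓ) • gradient f (x t)) :
    ∀ ε : ℝ, 0 < ε → ε ≤ ‖x₀ - xstar‖ →
      ∀ T : ℕ, (2 * ℓ / α) * Real.log (‖x₀ - xstar‖ / ε) ≤ T →
        ‖x T - xstar‖ ≤ ε := by
  intro ε hε _ T hT
  subst hx0
  exact stmt_1_general hdiff hlip (one_div_pos.2 hℓ) (one_div_mul_cancel hℓ.ne').le hα hmin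
    (fun y ↦ hsc y xstar) hxrec hε (by rwa [mul_one_div, div_div_eq_mul_div])
end

section
/- Let (Ω, ℱ, ℙ) be a probability space and let (Z_t)_{t ≥ 0} be a ℤ-valued stochastic process adapted to its natural filtration (ℱ_t)_{t ≥ 0}, ℱ_t = σ(Z_0, …, Z_t), such that almost surely |Z_{t+1} − Z_t| = 1 for every t, and such that for every t, almost surely the conditional probability satisfies ℙ(Z_{t+1} = Z_t − 1 ∣ ℱ_t) = w(R̃_t) / (w(L̃_t) + w(R̃_t)) and ℙ(Z_{t+1} = Z_t + 1 ∣ ℱ_t) = w(L̃_t) / (w(L̃_t) + w(R̃_t)), where R̃_t := #{s < t : Z_s = Z_t + 1} and L̃_t := #{s < t : Z_s = Z_t − 1} are the occupation counts of the two neighbors of the current position, and w : {0,1,2,…} → (0, ∞) is a monotone increasing function with w(n) → ∞ as n → ∞. Then ℙ( there exist t₀ > 0 and integers k ≤ ℓ such that Z_t ∈ {k, k+1, …, ℓ} for all t ≥ t₀ ) = 0; that is, almost surely the vertex-repelling random walk is not eventually confined to any finite set of points (it does not localize). -/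
open MeasureTheory Filter

/-!
If a site is visited only finitely often, the weight attached to it stays bounded, so each visit to
its right neighbour is followed by a step to it with conditional probability bounded away from zero.
By Lévy's conditional Borel–Cantelli lemma, almost surely `a - 1` is therefore visited infinitely
often whenever `a` is. A path that is eventually confined to `[k, l]` visits some site infinitely
often, hence also every site to the left of it, including those below `k`.
-/

section Path

variable {ι : Type*} {f : Filter ι} {z : ι → ℤ}

lemma frequently_eq_of_le_of_frequently_eq
    (hz : ∀ a, (∃ᶠ t in f, z t = a) → ∃ᶠ t in f, z t = a - 1)
    {a b : ℤ} (hba : b ≤ a) (ha : ∃ᶠ t in f, z t = a) : ∃ᶠ t in f, z t = b :=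
  Int.leInductionDown ha (fun n _ hn => hz n hn) b hba

lemma not_eventually_mem_Icc_of_frequently_sub_one [f.NeBot]
    (hz : ∀ a, (∃ᶠ t in f, z t = a) → ∃ᶠ t in f, z t = a - 1) (k l : ℤ) :
    ¬ ∀ᶠ t in f, z t ∈ Set.Icc k l := by
  intro hconf
  obtain ⟨a, hka, ha⟩ : ∃ a, k ≤ a ∧ ∃ᶠ t in f, z t = a := by
    have hsome : ∃ᶠ t in f, ∃ a ∈ Finset.Icc k l, z t = a :=
      hconf.frequently.mono fun t ht => ⟨z t, Finset.mem_Icc.2 ht, rfl⟩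
    obtain ⟨a, ha, hvisit⟩ := (Finset.frequently_exists _).1 hsome
    exact ⟨a, (Finset.mem_Icc.1 ha).1, hvisit⟩
  have hbelow : ∃ᶠ t in f, z t = k - 1 :=
    frequently_eq_of_le_of_frequently_eq hz (by lia) ha
  obtain ⟨t, ht, hmem⟩ := (hbelow.and_eventually hconf).exists
  have hkt := hmem.1
  lia

end Path

lemma div_add_le_div_add {K : Type*} [Field K] [LinearOrder K] [IsStrictOrderedRing K] {c x y : K}
    (hc : 0 < c) (hcx : c ≤ x) (hy : 0 ≤ y) : c / (y + c) ≤ x / (y + x) := by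
  rw [div_le_div_iff₀ (by linarith) (by linarith)]
  linarith [mul_le_mul_of_nonneg_right hcx hy]

lemma condExp_ae_eq_restrict_congr {Ω E : Type*} {m m0 : MeasurableSpace Ω}
    [NormedAddCommGroup E] [NormedSpace ℝ E] [CompleteSpace E] {μ : Measure Ω} {f g : Ω → E}
    {s : Set Ω} (hs : MeasurableSet[m] s) (hf : Integrable f μ) (hg : Integrable g μ)
    (hfg : f =ᵐ[μ.restrict s] g) : μ[f | m] =ᵐ[μ.restrict s] μ[g | m] := by
  have hzero : μ[f - g | m] =ᵐ[μ.restrict s] 0 :=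
    condExp_ae_eq_restrict_zero hs ((sub_ae_eq_zero f g).2 hfg)
  have hsub : μ[f - g | m] =ᵐ[μ.restrict s] μ[f | m] - μ[g | m] :=
    ae_restrict_of_ae (condExp_sub hf hg m)
  exact (sub_ae_eq_zero _ _).1 (hsub.symm.trans hzero)

section Recurrence

variable {Ω : Type*} {m0 : MeasurableSpace Ω} {μ : Measure Ω} [IsFiniteMeasure μ]
  {ℱ : Filtration ℕ m0}

lemma ae_frequently_mem_of_frequently_le_condExp {s : ℕ → Set Ω}
    (hs : ∀ n, MeasurableSet[ℱ n] (s n)) :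
    ∀ᵐ ω ∂μ, ∀ ε > 0, (∃ᶠ n in atTop, ε ≤ (μ[(s (n + 1)).indicator (1 : Ω → ℝ) | ℱ n]) ω) →
      ∃ᶠ n in atTop, ω ∈ s n := by
  have hnonneg : ∀ᵐ ω ∂μ, ∀ n, 0 ≤ (μ[(s (n + 1)).indicator (1 : Ω → ℝ) | ℱ n]) ω :=
    ae_all_iff.2 fun n => condExp_nonneg <|
      ae_of_all _ fun ω => Set.indicator_nonneg (fun _ _ => zero_le_one) ω
  filter_upwards [ae_mem_limsup_atTop_iff μ hs, hnonneg] with ω hLevy h0 ε hε hfreq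
  rw [← mem_limsup_iff_frequently_mem, hLevy, ← not_summable_iff_tendsto_nat_atTop_of_nonneg h0]
  intro hsum
  obtain ⟨n, hge, hlt⟩ :=
    (hfreq.and_eventually (hsum.tendsto_atTop_zero.eventually_lt_const hε)).exists
  exact hlt.not_ge hge

lemma ae_frequently_eq_of_le_condExp {E : Type*} [DecidableEq E] [MeasurableSpace E]
    [MeasurableSingletonClass E] {X : ℕ → Ω → E} (hX : Adapted ℱ X) {x y : E}
    {δ : ℕ → ℝ} (hδ : ∀ n, 0 < δ n)
    (hstep : ∀ t, ∀ᵐ ω ∂μ, X t ω = x → δ (Nat.count (fun s => X s ω = y) t) ≤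
      (μ[{ω | X (t + 1) ω = y}.indicator (1 : Ω → ℝ) | ℱ t]) ω) :
    ∀ᵐ ω ∂μ, (∃ᶠ t in atTop, X t ω = x) → ∃ᶠ t in atTop, X t ω = y := by
  have hmeas : ∀ t, MeasurableSet[ℱ t] {ω | X t ω = y} := fun t =>
    hX t (measurableSet_singleton y)
  filter_upwards [ae_frequently_mem_of_frequently_le_condExp hmeas, ae_all_iff.2 hstep]
    with ω hLevy hω hx
  by_contra hy
  have hfin : {t | X t ω = y}.Finite := by
    rwa [Nat.frequently_atTop_iff_infinite, Set.not_infinite] at hy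
  obtain ⟨N, -, hmin⟩ := (Finset.range ({t | X t ω = y}.ncard + 1)).exists_min_image δ (by simp)
  refine hy (hLevy (δ N) (hδ N) (hx.mono fun t ht => le_trans (hmin _ ?_) (hω t ht)))
  exact Finset.mem_range_succ_iff.2 (Nat.count_le_setNCard t hfin)

variable {Z : ℕ → Ω → ℤ} {w : ℕ → ℝ} {c : ℝ}

lemma ae_frequently_sub_one_of_frequently (hZ : Adapted ℱ Z) (hc : 0 < c) (hw : ∀ n, c ≤ w n)
    (hdown : ∀ t,
      μ[Set.indicator {ω | Z (t + 1) ω = Z t ω - 1} (fun _ => (1 : ℝ)) | ℱ t]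
        =ᵐ[μ] fun ω => w (Nat.count (fun s => Z s ω = Z t ω + 1) t) /
          (w (Nat.count (fun s => Z s ω = Z t ω - 1) t) +
            w (Nat.count (fun s => Z s ω = Z t ω + 1) t))) :
    ∀ᵐ ω ∂μ, ∀ a, (∃ᶠ t in atTop, Z t ω = a) → ∃ᶠ t in atTop, Z t ω = a - 1 := by
  have hw_pos : ∀ n, 0 < w n := fun n => hc.trans_le (hw n)
  have hZm : ∀ t, Measurable (Z t) := fun t => (hZ t).mono (ℱ.le t) le_rfl
  refine ae_all_iff.2 fun a => ae_frequently_eq_of_le_condExp hZ (δ := fun n => c / (w n + c))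
    (fun n => div_pos hc (add_pos (hw_pos n) hc)) fun t => ?_
  have hat : MeasurableSet[ℱ t] {ω | Z t ω = a} := hZ t (measurableSet_singleton a)
  have hcongr : μ[{ω | Z (t + 1) ω = a - 1}.indicator (1 : Ω → ℝ) | ℱ t]
      =ᵐ[μ.restrict {ω | Z t ω = a}]
        μ[Set.indicator {ω | Z (t + 1) ω = Z t ω - 1} (fun _ => (1 : ℝ)) | ℱ t] := by
    refine condExp_ae_eq_restrict_congr hat ?_ ?_ ?_
    · exact (integrable_const 1).indicator (hZm (t + 1) (measurableSet_singleton _))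
    · exact (integrable_const 1).indicator
        (measurableSet_eq_fun (hZm (t + 1)) ((hZm t).sub_const 1))
    · filter_upwards [ae_restrict_mem (ℱ.le t _ hat)] with ω hω
      simp only [Set.indicator, Set.mem_ofPred_eq, Pi.one_apply, show Z t ω = a from hω]
  filter_upwards [ae_imp_of_ae_restrict hcongr, hdown t] with ω hω hprob ha
  rw [hω ha, hprob, ha]
  exact div_add_le_div_add hc (hw _) (hw_pos _).le

theorem stmt_2_general (hZ : Adapted ℱ Z) (hc : 0 < c) (hw : ∀ n, c ≤ w n)
    (hdown : ∀ t,
      μ[Set.indicator {ω | Z (t + 1) ω = Z t ω - 1} (fun _ => (1 : ℝ)) | ℱ t]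
        =ᵐ[μ] fun ω => w (Nat.count (fun s => Z s ω = Z t ω + 1) t) /
          (w (Nat.count (fun s => Z s ω = Z t ω - 1) t) +
            w (Nat.count (fun s => Z s ω = Z t ω + 1) t))) :
    μ {ω | ∃ t₀ : ℕ, 0 < t₀ ∧ ∃ k l : ℤ, k ≤ l ∧ ∀ t, t₀ ≤ t → Z t ω ∈ Set.Icc k l} = 0 := by
  refine measure_eq_zero_iff_ae_notMem.2 ?_
  filter_upwards [ae_frequently_sub_one_of_frequently hZ hc hw hdown] with ω hω
  rintro ⟨t₀, -, k, l, -, hconf⟩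
  exact not_eventually_mem_Icc_of_frequently_sub_one hω k l (eventually_atTop.2 ⟨t₀, hconf⟩)

end Recurrence

lemma natural_apply_eq_iSup_range {Ω E : Type*} {m0 : MeasurableSpace Ω} [TopologicalSpace E]
    [TopologicalSpace.MetrizableSpace E] [mE : MeasurableSpace E] [BorelSpace E] {X : ℕ → Ω → E}
    (hX : ∀ t, StronglyMeasurable (X t)) (t : ℕ) :
    Filtration.natural X hX t = ⨆ s ∈ Finset.range (t + 1), MeasurableSpace.comap (X s) mE := by
  simp only [Finset.mem_range_succ_iff]
  rfl

/-- Non-localization of the vertex-repelling random walk: if the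
nearest-neighbor walk `Z` steps left/right with conditional probabilities (given its
natural filtration) proportional to the occupation-time weights `w(R̃_t)` / `w(L̃_t)`,
where `w` is increasing and tends to infinity, then almost surely the walk is not
eventually confined to any finite interval `{k, …, l}` of integers. -/
theorem stmt_2 {Ω : Type*} [MeasurableSpace Ω] (μ : Measure Ω) [IsProbabilityMeasure μ]
    (Z : ℕ → Ω → ℤ) (hZ : ∀ t, Measurable (Z t))
    (w : ℕ → ℝ) (hw_pos : ∀ n, 0 < w n) (hw_mono : Monotone w)
    (hw_tend : Tendsto w atTop atTop)
    (F : ℕ → MeasurableSpace Ω)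
    (hF : ∀ t, F t = ⨆ s ∈ Finset.range (t + 1), MeasurableSpace.comap (Z s) inferInstance)
    (L R : ℕ → Ω → ℕ)
    (hL : ∀ t ω, L t ω = ((Finset.range t).filter (fun s => Z s ω = Z t ω - 1)).card)
    (hR : ∀ t ω, R t ω = ((Finset.range t).filter (fun s => Z s ω = Z t ω + 1)).card)
    (hstep : ∀ t, ∀ᵐ ω ∂μ, |Z (t + 1) ω - Z t ω| = 1)
    (hdown : ∀ t,
      μ[Set.indicator {ω | Z (t + 1) ω = Z t ω - 1} (fun _ => (1 : ℝ)) | F t]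
        =ᵐ[μ] fun ω => w (R t ω) / (w (L t ω) + w (R t ω)))
    (hup : ∀ t,
      μ[Set.indicator {ω | Z (t + 1) ω = Z t ω + 1} (fun _ => (1 : ℝ)) | F t]
        =ᵐ[μ] fun ω => w (L t ω) / (w (L t ω) + w (R t ω))) :
    μ {ω | ∃ t₀ : ℕ, 0 < t₀ ∧ ∃ k l : ℤ, k ≤ l ∧ ∀ t, t₀ ≤ t → Z t ω ∈ Set.Icc k l} = 0 := by
  have hsm : ∀ t, StronglyMeasurable (Z t) := fun t => (hZ t).stronglyMeasurable
  obtain rfl : F = Filtration.natural Z hsm :=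
    funext fun t => (hF t).trans (natural_apply_eq_iSup_range hsm t).symm
  exact stmt_2_general (fun t => (Filtration.stronglyAdapted_natural hsm t).measurable) (hw_pos 0)
    (fun n => hw_mono n.zero_le)
    (by simpa only [hL, hR, Nat.count_eq_card_filter_range] using hdown)
end

section
/- Let f : ℝ → ℝ be twice continuously differentiable with ℓ-Lipschitz derivative (ℓ > 0), i.e., |f′(x) − f′(y)| ≤ ℓ|x − y| for all x, y ∈ ℝ. Fix a step size η with 0 < η < 1/ℓ and an initial point x₀ ∈ ℝ, and define the gradient descent iterates x_{n+1} = x_n − η f′(x_n). Suppose the sequence (x_n)_{n ≥ 0} converges to a point x_s with f″(x_s) ≠ 0. Then the sequence (x_n)_{n ≥ 0} is monotone (either nonincreasing for all n or nondecreasing for all n), hence it converges monotonically to x_s. -/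
/-!
Let `g = f'`. The slopes of `g` are at most `ℓ` and `η * ℓ ≤ 1`, so `η * g` grows no faster than
the identity, and the step `y ↦ y - η * g y` preserves order. In a linear order, an orbit of an
order-preserving map is monotone, in the direction of its first step.
-/

theorem sub_le_mul_sub_of_abs_sub_le {R : Type*} [Ring R] [LinearOrder R] [IsOrderedRing R]
    {g : R → R} {ℓ : R} (hg : ∀ a b, |g a - g b| ≤ ℓ * |a - b|) ⦃a b : R⦄ (hab : a ≤ b) :
    g b - g a ≤ ℓ * (b - a) :=
  calc g b - g a ≤ |g b - g a| := le_abs_self _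
    _ ≤ ℓ * |b - a| := hg b a
    _ = ℓ * (b - a) := by rw [abs_of_nonneg (sub_nonneg.2 hab)]

theorem monotone_sub_mul_of_sub_le {R : Type*} [Ring R] [PartialOrder R] [IsOrderedRing R]
    {g : R → R} {η ℓ : R} (hg : ∀ ⦃a b⦄, a ≤ b → g b - g a ≤ ℓ * (b - a))
    (hη : 0 ≤ η) (hηℓ : η * ℓ ≤ 1) : Monotone fun y ↦ y - η * g y := by
  intro a b hab
  have increment_le : η * g b - η * g a ≤ b - a :=
    calc η * g b - η * g a = η * (g b - g a) := (mul_sub ..).symm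
      _ ≤ η * (ℓ * (b - a)) := mul_le_mul_of_nonneg_left (hg hab) hη
      _ = η * ℓ * (b - a) := (mul_assoc ..).symm
      _ ≤ b - a := mul_le_of_le_one_left (sub_nonneg.2 hab) hηℓ
  exact sub_le_sub_iff.2 ((add_comm ..).trans_le (sub_le_sub_iff.1 increment_le))

theorem monotone_or_antitone_of_succ_eq_map {α : Type*} [LinearOrder α] {T : α → α}
    (hT : Monotone T) {x : ℕ → α} (hx : ∀ n, x (n + 1) = T (x n)) :
    Monotone x ∨ Antitone x := by
  have x_eq_iterate : x = fun n ↦ T^[n] (x 0) := by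
    funext n
    induction n with
    | zero => rfl
    | succ n ih => rw [hx, ih, Function.iterate_succ_apply']
  rw [x_eq_iterate]
  exact (le_total (x 0) (T (x 0))).imp hT.monotone_iterate_of_le_map
    hT.antitone_iterate_of_map_le

theorem stmt_4_general {R : Type*} [Ring R] [LinearOrder R] [IsOrderedRing R]
    {g : R → R} {η ℓ : R} (hg : ∀ ⦃a b⦄, a ≤ b → g b - g a ≤ ℓ * (b - a))
    (hη : 0 ≤ η) (hηℓ : η * ℓ ≤ 1) {x : ℕ → R} (hx : ∀ n, x (n + 1) = x n - η * g (x n)) :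
    Monotone x ∨ Antitone x :=
  monotone_or_antitone_of_succ_eq_map (monotone_sub_mul_of_sub_le hg hη hηℓ) hx

/-- If one-dimensional gradient descent with step size `0 < η < 1/ℓ`
on a `C²`, `ℓ`-smooth function converges to a point `x_s` with `f''(x_s) ≠ 0`, then the
whole sequence of iterates is monotone. -/
theorem stmt_4 (f : ℝ → ℝ) (ℓ : ℝ) (hℓ : 0 < ℓ)
    (hf : ContDiff ℝ 2 f)
    (hlip : ∀ a b : ℝ, |deriv f a - deriv f b| ≤ ℓ * |a - b|)
    (η : ℝ) (hη0 : 0 < η) (hη : η < 1 / ℓ)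
    (x₀ : ℝ) (x : ℕ → ℝ) (hx0 : x 0 = x₀)
    (hxrec : ∀ n, x (n + 1) = x n - η * deriv f (x n))
    (xs : ℝ) (hconv : Filter.Tendsto x Filter.atTop (nhds xs))
    (hsec : deriv (deriv f) xs ≠ 0) :
    Monotone x ∨ Antitone x := by
  exact stmt_4_general (sub_le_mul_sub_of_abs_sub_le hlip) hη0.le ((lt_div_iff₀ hℓ).1 hη).le hxrec
end

section
/- Let f : ℝ → ℝ be twice continuously differentiable with ℓ-Lipschitz derivative (ℓ > 0), i.e., |f′(x) − f′(y)| ≤ ℓ|x − y| for all x, y ∈ ℝ. Fix a step size η with 0 < η < 1/ℓ and an initial point x₀ ∈ ℝ, and define the gradient descent iterates x_{n+1} = x_n − η f′(x_n). Suppose the sequence (x_n)_{n ≥ 0} converges to a point x_s with f″(x_s) ≠ 0. Then there exists M > 0 such that the tail sequence (x_n)_{n ≥ M} is monotone, hence converges monotonically to x_s. -/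
/-! The gradient step `y ↦ y - η * f' y` is monotone on the whole line, because `η * f'` is
`1`-Lipschitz. Every orbit of a monotone self-map of a linear order is monotone, in the direction of
its first step. -/

theorem monotone_sub_of_abs_sub_le {G : Type*} [AddCommGroup G] [LinearOrder G]
    [IsOrderedAddMonoid G] {h : G → G} (hh : ∀ a b, |h a - h b| ≤ |a - b|) :
    Monotone fun y => y - h y := by
  intro a b hab
  have increment_le : h b - h a ≤ b - a :=
    calc
      h b - h a ≤ |h b - h a| := le_abs_self _
      _ ≤ |b - a| := hh b a
      _ = b - a := abs_of_nonneg (sub_nonneg.2 hab)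
  rw [sub_le_sub_iff, add_comm a]
  exact sub_le_sub_iff.1 increment_le

theorem monotone_or_antitone_of_forall_succ_eq {α : Type*} [LinearOrder α] {g : α → α}
    (hg : Monotone g) {x : ℕ → α} (hx : ∀ n, x (n + 1) = g (x n)) : Monotone x ∨ Antitone x := by
  rcases le_total (x 0) (x 1) with h01 | h10
  · exact .inl <| monotone_nat_of_le_succ fun n =>
      hg.seq_le_seq n h01 (fun k _ => (hx k).le) fun k _ => (hx (k + 1)).ge
  · exact .inr <| antitone_nat_of_succ_le fun n =>
      hg.seq_le_seq (x := fun k => x (k + 1)) n h10 (fun k _ => (hx (k + 1)).le)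
        fun k _ => (hx k).ge

theorem stmt_5_general {R : Type*} [Ring R] [LinearOrder R] [IsOrderedRing R] (v : R → R)
    (ℓ : R) (hlip : ∀ a b, |v a - v b| ≤ ℓ * |a - b|) (η : R) (hη : |η| * ℓ ≤ 1) (x : ℕ → R)
    (hxrec : ∀ n, x (n + 1) = x n - η * v (x n)) : Monotone x ∨ Antitone x := by
  have step_lipschitz (a b : R) : |η * v a - η * v b| ≤ |a - b| :=
    calc
      |η * v a - η * v b| = |η| * |v a - v b| := by rw [← mul_sub, abs_mul]
      _ ≤ |η| * (ℓ * |a - b|) := by gcongr; exact hlip a b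
      _ = |η| * ℓ * |a - b| := (mul_assoc _ _ _).symm
      _ ≤ |a - b| := mul_le_of_le_one_left (abs_nonneg _) hη
  exact monotone_or_antitone_of_forall_succ_eq (monotone_sub_of_abs_sub_le step_lipschitz) hxrec

/-- If one-dimensional gradient descent with step size `0 < η < 1/ℓ`
on a `C²`, `ℓ`-smooth function converges to a point `x_s` with `f''(x_s) ≠ 0`, then some
tail `(x_n)_{n ≥ M}` (with `M > 0`) of the iterate sequence is monotone. -/
theorem stmt_5 (f : ℝ → ℝ) (ℓ : ℝ) (hℓ : 0 < ℓ)
    (hf : ContDiff ℝ 2 f)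
    (hlip : ∀ a b : ℝ, |deriv f a - deriv f b| ≤ ℓ * |a - b|)
    (η : ℝ) (hη0 : 0 < η) (hη : η < 1 / ℓ)
    (x₀ : ℝ) (x : ℕ → ℝ) (hx0 : x 0 = x₀)
    (hxrec : ∀ n, x (n + 1) = x n - η * deriv f (x n))
    (xs : ℝ) (hconv : Filter.Tendsto x Filter.atTop (nhds xs))
    (hsec : deriv (deriv f) xs ≠ 0) :
    ∃ M : ℕ, 0 < M ∧
      (Monotone (fun n => x (n + M)) ∨ Antitone (fun n => x (n + M))) := by
  have hηℓ : |η| * ℓ ≤ 1 := by simpa only [abs_of_pos hη0] using ((lt_div_iff₀ hℓ).1 hη).le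
  exact ⟨1, one_pos, (stmt_5_general (deriv f) ℓ hlip η hηℓ x hxrec).imp
    (·.comp add_left_mono) (·.comp_monotone add_left_mono)⟩
end
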